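/- arXiv:2509.20183 — 4 statements merged into one kernel-verified Lean document; each statement's English description precedes it below -/
import Mathlib

section
/- For every integer d ≥ 1 and every real ε with 0 < ε ≤ 1, there exists a polynomial p with real coefficients of degree at most ⌈√(2·d·log(2/ε))⌉ such that |x^d − p(x)| ≤ ε for all x ∈ [−1, 1]. -/
open Polynomial in
/-- Approximation of `x^d T_m(x)` in degree `K`, with an exponential-moment error bound. -/
lemma cheb_aux (K : ℕ) (t : ℝ) (ht : 0 ≤ t) (d : ℕ) : ∀ m : ℤ,
    ∃ p : Polynomial ℝ, p.natDegree ≤ K ∧ ∀ x ∈ Set.Icc (-1 : ℝ) 1,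
      |x ^ d * (Chebyshev.T ℝ m).eval x - p.eval x| ≤
        2 * Real.cosh (t * m) * Real.cosh t ^ d * Real.exp (-(t * K)) := by
  induction d with
  | zero =>
    intro m
    by_cases hm : m.natAbs ≤ K
    · refine ⟨Chebyshev.T ℝ m, by rw [Chebyshev.natDegree_T]; exact hm, fun x _ => ?_⟩
      have := Real.cosh_pos (t * m)
      simp only [pow_zero, one_mul, sub_self, abs_zero]
      positivity
    · refine ⟨0, by simp, fun x hx => ?_⟩
      have h1 : |(Chebyshev.T ℝ m).eval x| ≤ 1 :=
        Chebyshev.abs_eval_T_real_le_one m (abs_le.mpr hx)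
      have hK : (K : ℝ) ≤ |(m : ℝ)| := by
        have : (K : ℤ) ≤ |m| := by rw [Int.abs_eq_natAbs]; omega
        exact_mod_cast this
      have h2 : Real.exp (t * K) ≤ 2 * Real.cosh (t * m) := by
        rw [← Real.cosh_abs, abs_mul, abs_of_nonneg ht, Real.cosh_eq]
        have h3 : Real.exp (t * K) ≤ Real.exp (t * |(m : ℝ)|) :=
          Real.exp_le_exp.mpr (mul_le_mul_of_nonneg_left hK ht)
        have h4 := Real.exp_pos (-(t * |(m : ℝ)|))
        linarith
      have h5 : 1 ≤ 2 * Real.cosh (t * m) * Real.exp (-(t * K)) := by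
        calc (1 : ℝ) = Real.exp (t * K) * Real.exp (-(t * K)) := by
              rw [← Real.exp_add]; simp
          _ ≤ _ := mul_le_mul_of_nonneg_right h2 (Real.exp_pos _).le
      simpa using h1.trans h5
  | succ d ih =>
    intro m
    obtain ⟨p, hp, hp'⟩ := ih (m + 1)
    obtain ⟨q, hq, hq'⟩ := ih (m - 1)
    refine ⟨C (1 / 2) * (p + q), ?_, fun x hx => ?_⟩
    · exact (natDegree_C_mul_le _ _).trans (natDegree_add_le_of_degree_le hp hq)
    · have a := hp' x hx
      have b := hq' x hx
      have e : (Chebyshev.T ℝ (m + 1)).eval x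
          = 2 * x * (Chebyshev.T ℝ m).eval x - (Chebyshev.T ℝ (m - 1)).eval x := by
        rw [Chebyshev.T_add_one]; simp
      have key : x ^ (d + 1) * (Chebyshev.T ℝ m).eval x - (C (1 / 2) * (p + q)).eval x
          = ((x ^ d * (Chebyshev.T ℝ (m + 1)).eval x - p.eval x)
            + (x ^ d * (Chebyshev.T ℝ (m - 1)).eval x - q.eval x)) / 2 := by
        rw [e]; simp only [eval_mul, eval_C, eval_add]; ring
      have c1 : Real.cosh (t * ((m + 1 : ℤ) : ℝ)) + Real.cosh (t * ((m - 1 : ℤ) : ℝ))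
          = 2 * Real.cosh (t * m) * Real.cosh t := by
        push_cast
        rw [mul_add, mul_sub, mul_one, Real.cosh_add, Real.cosh_sub]; ring
      have c2 : 2 * Real.cosh (t * m) * Real.cosh t ^ (d + 1) * Real.exp (-(t * K))
          = (2 * Real.cosh (t * ((m + 1 : ℤ) : ℝ)) * Real.cosh t ^ d * Real.exp (-(t * K))
            + 2 * Real.cosh (t * ((m - 1 : ℤ) : ℝ)) * Real.cosh t ^ d
              * Real.exp (-(t * K))) / 2 := by
        linear_combination (-(Real.cosh t ^ d * Real.exp (-(t * K)))) * c1
      rw [key, c2, abs_div, abs_two]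
      have := abs_add_le (x ^ d * (Chebyshev.T ℝ (m + 1)).eval x - p.eval x)
        (x ^ d * (Chebyshev.T ℝ (m - 1)).eval x - q.eval x)
      linarith

/-- Chebyshev-based low-degree approximation of the monomial `x^d`
on `[-1, 1]`. -/
theorem monomial_chebyshev_approx (d : ℕ) (hd : 1 ≤ d) (ε : ℝ) (hε : 0 < ε) (hε' : ε ≤ 1) :
    ∃ p : Polynomial ℝ,
      p.natDegree ≤ ⌈Real.sqrt (2 * d * Real.log (2 / ε))⌉₊ ∧
      ∀ x ∈ Set.Icc (-1 : ℝ) 1, |x ^ d - p.eval x| ≤ ε := by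
  have hK := Nat.le_ceil (Real.sqrt (2 * d * Real.log (2 / ε)))
  generalize ⌈Real.sqrt (2 * d * Real.log (2 / ε))⌉₊ = K at hK ⊢
  have hd0 : (0 : ℝ) < d := by exact_mod_cast hd
  have hK2 : 2 * d * Real.log (2 / ε) ≤ (K : ℝ) ^ 2 :=
    (Real.sqrt_le_left (Nat.cast_nonneg K)).mp hK
  obtain ⟨p, hp, h⟩ := cheb_aux K (K / d) (by positivity) d 0
  refine ⟨p, hp, fun x hx => ?_⟩
  have h1 := h x hx
  simp only [Polynomial.Chebyshev.T_zero, Polynomial.eval_one, mul_one, Int.cast_zero, mul_zero,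
    Real.cosh_zero] at h1
  refine h1.trans ?_
  have h2 : Real.cosh (K / d : ℝ) ^ d ≤ Real.exp ((K : ℝ) ^ 2 / (2 * d)) := by
    calc _ ≤ Real.exp ((K / d : ℝ) ^ 2 / 2) ^ d :=
          pow_le_pow_left₀ (Real.cosh_pos _).le (Real.cosh_le_exp_half_sq _) _
      _ = _ := by
          rw [← Real.exp_nat_mul]; congr 1; field_simp
  have h3 : Real.log (2 / ε) ≤ (K : ℝ) ^ 2 / (2 * d) := by
    rw [le_div_iff₀ (by positivity)]; linarith
  calc 2 * Real.cosh (K / d : ℝ) ^ d * Real.exp (-(K / d * K))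
      ≤ 2 * Real.exp ((K : ℝ) ^ 2 / (2 * d)) * Real.exp (-(K / d * K)) := by gcongr
    _ = 2 * Real.exp (-((K : ℝ) ^ 2 / (2 * d))) := by
        rw [mul_assoc, ← Real.exp_add]; congr 2; field_simp; ring
    _ ≤ 2 * Real.exp (-Real.log (2 / ε)) := by gcongr
    _ = ε := by
        rw [Real.exp_neg, Real.exp_log (by positivity)]; field_simp
end

section
/- There exists a constant C ≥ 1 such that for every real κ ≥ 2 and every real ε with 0 < ε ≤ 1/2, there exists a polynomial p with real coefficients of degree at most C·√κ·log(κ/ε) satisfying |p(x) − log(x)| ≤ ε for all x ∈ [1/κ, 1]. -/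
lemma aux_approx (r θ : ℝ) (h0 : 0 < r) (h1 : r < 1) (N : ℕ) :
    |Real.log (1 - 2 * r * Real.cos θ + r ^ 2)
      + 2 * ∑ j ∈ Finset.range (N + 1), r ^ j / j * Real.cos (j * θ)|
      ≤ 2 * (r ^ (N + 1) / (1 - r)) := by
  set z : ℂ := r * Complex.exp (θ * Complex.I) with hz
  have hzn : ‖z‖ = r := by
    rw [hz, norm_mul, Complex.norm_exp_ofReal_mul_I, Complex.norm_real, mul_one,
      Real.norm_of_nonneg h0.le]
  have hb := Complex.norm_log_sub_logTaylor_le N (z := -z) (by rw [norm_neg, hzn]; exact h1)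
  rw [norm_neg, hzn] at hb
  have hre := (Complex.abs_re_le_norm _).trans hb
  have hzj : ∀ j : ℕ, (z ^ j).re = r ^ j * Real.cos (j * θ) := by
    intro j
    have : z ^ j = ((r ^ j : ℝ) : ℂ) * Complex.exp (((j * θ : ℝ) : ℂ) * Complex.I) := by
      rw [hz, mul_pow, ← Complex.exp_nat_mul]
      push_cast
      ring_nf
    rw [this, Complex.re_ofReal_mul, Complex.exp_ofReal_mul_I_re]
  have hT : (Complex.logTaylor (N + 1) (-z)).re
      = -∑ j ∈ Finset.range (N + 1), r ^ j / j * Real.cos (j * θ) := by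
    rw [Complex.logTaylor, Complex.re_sum, ← Finset.sum_neg_distrib]
    refine Finset.sum_congr rfl fun j _ => ?_
    have : (-1 : ℂ) ^ (j + 1) * (-z) ^ j / j = -(z ^ j / j) := by
      rw [neg_pow z, pow_succ]
      have : (-1 : ℂ) ^ j * (-1) ^ j = 1 := by rw [← mul_pow]; simp
      linear_combination (-(z ^ j / j)) * this
    rw [this, Complex.neg_re, Complex.div_natCast_re, hzj]
    ring
  have hL : Real.log (1 - 2 * r * Real.cos θ + r ^ 2) = 2 * (Complex.log (1 + -z)).re := by
    rw [Complex.log_re]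
    have : 1 - 2 * r * Real.cos θ + r ^ 2 = ‖1 + -z‖ ^ 2 := by
      rw [← Complex.normSq_eq_norm_sq, Complex.normSq_apply]
      have e1 : (1 + -z).re = 1 - r * Real.cos θ := by
        simp [hz, Complex.exp_ofReal_mul_I_re]; ring
      have e2 : (1 + -z).im = - (r * Real.sin θ) := by
        simp [hz, Complex.exp_ofReal_mul_I_im]
      rw [e1, e2]
      linear_combination (-r ^ 2) * Real.sin_sq_add_cos_sq θ
    rw [this, Real.log_pow]
    norm_num
  rw [Complex.sub_re, hT] at hre
  rw [hL, ← mul_add, abs_mul, abs_two]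
  rw [sub_neg_eq_add] at hre
  refine mul_le_mul_of_nonneg_left (hre.trans ?_) (by norm_num)
  rw [← div_eq_mul_inv]
  apply div_le_self
  · exact div_nonneg (pow_nonneg h0.le _) (by linarith)
  · have : (0 : ℝ) ≤ N := Nat.cast_nonneg N
    linarith

/-- There is a universal constant `C ≥ 1` such that the logarithm admits an
`ε`-uniform polynomial approximation of degree `O(√κ·log(κ/ε))` on `[1/κ, 1]`. -/
theorem log_low_degree_approx :
    ∃ C : ℝ, 1 ≤ C ∧ ∀ κ ε : ℝ, 2 ≤ κ → 0 < ε → ε ≤ 1 / 2 →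
      ∃ p : Polynomial ℝ,
        (p.natDegree : ℝ) ≤ C * Real.sqrt κ * Real.log (κ / ε) ∧
        ∀ x ∈ Set.Icc (1 / κ) 1, |p.eval x - Real.log x| ≤ ε := by
  refine ⟨2, by norm_num, fun κ ε hκ hε hε2 => ?_⟩
  set s := Real.sqrt κ with hs
  have hs2 : s ^ 2 = κ := Real.sq_sqrt (by linarith)
  have hs1 : 1 < s := by
    rw [hs]; exact Real.lt_sqrt_of_sq_lt (by linarith)
  obtain ⟨r, hr⟩ : ∃ r, r = (s - 1) / (s + 1) := ⟨_, rfl⟩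
  have h0 : 0 < r := by rw [hr]; exact div_pos (by linarith) (by linarith)
  have hr1 : 1 - r = 2 / (s + 1) := by rw [hr]; field_simp; ring
  have hr2 : 1 + r = 2 * s / (s + 1) := by rw [hr]; field_simp; ring
  have h1 : r < 1 := by
    have : 0 < 2 / (s + 1) := by positivity
    linarith
  have hrs : (1 - r) * s = 1 + r := by rw [hr1, hr2]; ring
  have hrk : (1 - r) ^ 2 * κ = (1 + r) ^ 2 := by rw [← hs2, ← hrs]; ring
  set L := Real.log (2 * κ / ε) with hLdef
  have hke : 0 < κ / ε := by positivity
  have hL2 : L ≤ 2 * Real.log (κ / ε) := by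
    have h2 : 2 ≤ κ / ε := by rw [le_div_iff₀ hε]; linarith
    have : Real.log 2 ≤ Real.log (κ / ε) := Real.log_le_log (by norm_num) h2
    rw [hLdef, mul_div_assoc, Real.log_mul (by norm_num) hke.ne']
    linarith
  have hL0 : 0 ≤ L := by
    apply Real.log_nonneg
    rw [le_div_iff₀ hε]; linarith
  obtain ⟨N, hN⟩ : ∃ N, N = ⌊s * L⌋₊ := ⟨_, rfl⟩
  have hN1 : (N : ℝ) ≤ s * L := by rw [hN]; exact Nat.floor_le (by positivity)
  have hN2 : s * L ≤ ((N + 1 : ℕ) : ℝ) := by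
    rw [hN]; push_cast; exact (Nat.lt_floor_add_one _).le
  have herr : 2 * (r ^ (N + 1) / (1 - r)) ≤ ε := by
    have hre : r ≤ Real.exp (-(1 / s)) := by
      have ha := Real.add_one_le_exp (-(1 / s))
      have : 1 / s ≤ 2 / (s + 1) := by
        rw [div_le_div_iff₀ (by linarith) (by linarith)]; linarith
      linarith
    have hp : r ^ (N + 1) ≤ ε / (2 * κ) := by
      calc r ^ (N + 1) ≤ Real.exp (-(1 / s)) ^ (N + 1) := by gcongr
        _ = Real.exp (((N + 1 : ℕ) : ℝ) * (-(1 / s))) := (Real.exp_nat_mul _ _).symm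
        _ ≤ Real.exp (-L) := by
          apply Real.exp_le_exp.2
          have : L ≤ ((N + 1 : ℕ) : ℝ) / s := by
            rw [le_div_iff₀ (by linarith)]; linarith
          rw [mul_neg, mul_one_div]; linarith
        _ = ε / (2 * κ) := by
          rw [Real.exp_neg, Real.exp_log (by positivity), inv_div]
    have e : 2 * (r ^ (N + 1) / (1 - r)) = (s + 1) * r ^ (N + 1) := by
      rw [hr1]; field_simp
    rw [e]
    calc (s + 1) * r ^ (N + 1) ≤ (2 * κ) * (ε / (2 * κ)) := by
          gcongr
          nlinarith
      _ = ε := by field_simp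
  obtain ⟨q, hq⟩ : ∃ q : Polynomial ℝ, q = Polynomial.C (-(1 + r) ^ 2 / (2 * r)) * Polynomial.X
    + Polynomial.C ((1 + r ^ 2) / (2 * r)) := ⟨_, rfl⟩
  have hqd : q.natDegree ≤ 1 := by rw [hq]; exact Polynomial.natDegree_linear_le
  refine ⟨Polynomial.C (-Real.log ((1 + r) ^ 2)) - ∑ j ∈ Finset.range (N + 1),
    Polynomial.C (2 * (r ^ j / j)) * (Polynomial.Chebyshev.T ℝ j).comp q, ?_, ?_⟩
  · have hd : (Polynomial.C (-Real.log ((1 + r) ^ 2)) - ∑ j ∈ Finset.range (N + 1),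
        Polynomial.C (2 * (r ^ j / j)) * (Polynomial.Chebyshev.T ℝ j).comp q).natDegree ≤ N := by
      refine (Polynomial.natDegree_sub_le_of_le (m := N) (n := N) ?_ ?_).trans (max_self N).le
      · rw [Polynomial.natDegree_C]; exact Nat.zero_le N
      · apply Polynomial.natDegree_sum_le_of_forall_le
        intro j hj
        refine (Polynomial.natDegree_C_mul_le _ _).trans (Polynomial.natDegree_comp_le.trans ?_)
        rw [Polynomial.Chebyshev.natDegree_T, Int.natAbs_natCast]
        have := Finset.mem_range.1 hj
        nlinarith
    calc _ ≤ (N : ℝ) := by exact_mod_cast hd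
      _ ≤ s * L := hN1
      _ ≤ s * (2 * Real.log (κ / ε)) := by gcongr
      _ = _ := by ring
  · rintro x ⟨hx1, hx2⟩
    have hx0 : 0 < x := lt_of_lt_of_le (by positivity) hx1
    have hxk : 1 ≤ x * κ := by rwa [div_le_iff₀ (by linarith)] at hx1
    have hqe : q.eval x = (1 + r ^ 2 - (1 + r) ^ 2 * x) / (2 * r) := by
      rw [hq]; simp; ring
    have hy1 : -1 ≤ q.eval x := by
      rw [hqe, le_div_iff₀ (by positivity)]
      nlinarith [sq_nonneg (1 + r)]
    have hy2 : q.eval x ≤ 1 := by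
      rw [hqe, div_le_iff₀ (by positivity), ← hrk]
      nlinarith [sq_nonneg (1 - r)]
    have hc := Real.cos_arccos hy1 hy2
    have hm := (aux_approx r (Real.arccos (q.eval x)) h0 h1 N).trans herr
    rw [hc] at hm
    have hxe : 1 - 2 * r * q.eval x + r ^ 2 = (1 + r) ^ 2 * x := by
      rw [hqe]; field_simp; ring
    rw [hxe, Real.log_mul (by positivity) hx0.ne'] at hm
    have hpe : (Polynomial.C (-Real.log ((1 + r) ^ 2)) - ∑ j ∈ Finset.range (N + 1),
        Polynomial.C (2 * (r ^ j / j)) * (Polynomial.Chebyshev.T ℝ j).comp q).eval x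
        = -Real.log ((1 + r) ^ 2) - 2 * ∑ j ∈ Finset.range (N + 1),
          r ^ j / j * Real.cos (j * Real.arccos (q.eval x)) := by
      rw [Polynomial.eval_sub, Polynomial.eval_C, Polynomial.eval_finsetSum, Finset.mul_sum]
      congr 1
      refine Finset.sum_congr rfl fun j _ => ?_
      rw [Polynomial.eval_mul, Polynomial.eval_C, Polynomial.eval_comp]
      have := Polynomial.Chebyshev.T_real_cos (Real.arccos (q.eval x)) j
      rw [hc] at this
      rw [this]
      push_cast
      ring
    rw [hpe, ← abs_neg]
    refine le_of_eq_of_le (congrArg abs ?_) hm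
    ring
end

section
/- There exists a constant C ≥ 1 such that for every real κ ≥ 2 and every real ε with 0 < ε ≤ 1/2, there exists a polynomial p with real coefficients of degree at most C·√κ·log(κ/ε) satisfying |p(x) − 1/x| ≤ ε for all x ∈ [1/κ, 1]. -/
open Polynomial in
/-- There is a universal constant `C ≥ 1` such that `1/x` admits an
`ε`-uniform polynomial approximation of degree `O(√κ·log(κ/ε))` on `[1/κ, 1]`. -/
theorem inverse_low_degree_approx :
    ∃ C : ℝ, 1 ≤ C ∧ ∀ κ ε : ℝ, 2 ≤ κ → 0 < ε → ε ≤ 1 / 2 →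
      ∃ p : Polynomial ℝ,
        (p.natDegree : ℝ) ≤ C * Real.sqrt κ * Real.log (κ / ε) ∧
        ∀ x ∈ Set.Icc (1 / κ) 1, |p.eval x - 1 / x| ≤ ε := by
  refine ⟨3, by norm_num, fun κ ε hκ hε hε2 => ?_⟩
  have hκ0 : 0 < κ := by linarith
  have hs1 : 1 ≤ √κ := Real.one_le_sqrt.mpr (by linarith)
  have hs0 : 0 < √κ := by linarith
  have hsq : √κ * √κ = κ := Real.mul_self_sqrt hκ0.le
  have h4 : (4 : ℝ) ≤ κ / ε := by
    rw [le_div_iff₀ hε]; linarith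
  have hl4 : Real.log 4 = 2 * Real.log 2 := by
    rw [show (4 : ℝ) = 2 ^ 2 by norm_num, Real.log_pow]; norm_num
  have hlog : 2 * Real.log 2 ≤ Real.log (κ / ε) := by
    rw [← hl4]; exact Real.log_le_log (by norm_num) h4
  have hl2 := Real.log_two_gt_d9
  have hlk : Real.log (2 * (κ / ε)) = Real.log 2 + Real.log (κ / ε) :=
    Real.log_mul (by norm_num) (by positivity)
  set L := Real.log (κ / ε) with hL
  obtain ⟨n, hn⟩ : ∃ n : ℕ, n = ⌈√κ * Real.log (2 * (κ / ε))⌉₊ := ⟨_, rfl⟩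
  have hn1 : √κ * Real.log (2 * (κ / ε)) ≤ n := hn ▸ Nat.le_ceil _
  have hn2 : (n : ℝ) < √κ * Real.log (2 * (κ / ε)) + 1 := by
    rw [hn]; exact Nat.ceil_lt_add_one (by rw [hlk]; apply mul_nonneg <;> linarith)
  set θ : ℝ := 1 / √κ with hθ
  have hnθ : Real.log (2 * (κ / ε)) ≤ n * θ := by
    rw [hθ, mul_one_div, le_div_iff₀ hs0]; linarith
  have hcosh1 : 1 ≤ Real.cosh θ := Real.one_le_cosh θ
  have hcosh2 : Real.cosh θ ≤ 1 + 1 / κ := by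
    have h1 := Real.cosh_le_exp_half_sq θ
    have h2 : θ ^ 2 = 1 / κ := by rw [hθ, div_pow, one_pow, sq, hsq]
    rw [h2] at h1
    have h3 : 1 / κ ≤ 1 / 2 := one_div_le_one_div_of_le (by norm_num) hκ
    have h0 : 0 < 1 / κ := by positivity
    have h5 := Real.add_one_le_exp (-(1 / κ / 2))
    have h6 : Real.exp (-(1 / κ / 2)) * Real.exp (1 / κ / 2) = 1 := by
      rw [← Real.exp_add]; simp
    have h7 := Real.exp_pos (1 / κ / 2)
    generalize 1 / κ = t at *
    nlinarith
  set c := Real.cosh θ with hc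
  let ℓ : ℝ[X] := C c - C (1 + c) * X
  let q : ℝ[X] := (Chebyshev.T ℝ n).comp ℓ
  have hq0 : q.eval 0 = Real.cosh (n * θ) := by
    have := Chebyshev.T_real_cosh θ n
    simp only [q, ℓ, eval_comp]
    simp only [eval_sub, eval_mul, eval_C, eval_X, mul_zero, sub_zero]
    exact_mod_cast this
  have hM : 2 * (κ / ε) / 2 ≤ q.eval 0 := by
    have h1 : 2 * (κ / ε) ≤ Real.exp (n * θ) := by
      rw [← Real.log_le_iff_le_exp (by positivity)]; exact hnθ
    have h2 := Real.exp_pos (-(n * θ))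
    rw [hq0, Real.cosh_eq]; linarith
  set M := q.eval 0 with hMdef
  have hM' : κ / ε ≤ M := by linarith
  have hM0 : 0 < M := by linarith
  have hr0 : (1 - C M⁻¹ * q).coeff 0 = 0 := by
    rw [coeff_zero_eq_eval_zero]
    simp [← hMdef, hM0.ne']
  refine ⟨(1 - C M⁻¹ * q).divX, ?_, fun x hx => ?_⟩
  · have hqd : q.natDegree ≤ n := by
      refine natDegree_comp_le.trans ?_
      have h1 : ℓ.natDegree ≤ 1 := by
        simp only [ℓ]; compute_degree
      have h2 : (Chebyshev.T ℝ n).natDegree = n := by simp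
      rw [h2]; nlinarith
    have hd : (1 - C M⁻¹ * q).divX.natDegree ≤ n := by
      rw [natDegree_divX_eq_natDegree_tsub_one]
      refine (Nat.sub_le _ _).trans ?_
      refine (natDegree_sub_le _ _).trans ?_
      simp only [natDegree_one]
      exact max_le (Nat.zero_le _) ((natDegree_C_mul_le _ _).trans hqd)
    have hd' : ((1 - C M⁻¹ * q).divX.natDegree : ℝ) ≤ n := by exact_mod_cast hd
    rw [hlk] at hn2
    nlinarith
  · obtain ⟨hx1, hx2⟩ := hx
    have hx0 : 0 < x := lt_of_lt_of_le (by positivity) hx1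
    have hκx : 1 ≤ κ * x := by
      rw [div_le_iff₀ hκ0] at hx1; linarith
    have hev := congrArg (eval x) (divX_mul_X_add (1 - C M⁻¹ * q))
    rw [hr0] at hev
    simp only [eval_add, eval_mul, eval_X, eval_C, eval_sub, eval_one, add_zero] at hev
    have hqx : |q.eval x| ≤ 1 := by
      simp only [q, eval_comp]
      apply Chebyshev.abs_eval_T_real_le_one
      simp only [ℓ, eval_sub, eval_mul, eval_C, eval_X]
      rw [abs_le]; constructor <;> nlinarith
    have e : (1 - C M⁻¹ * q).divX.eval x - 1 / x = -(q.eval x / (M * x)) := by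
      field_simp
      field_simp at hev
      linarith
    rw [e, abs_neg, abs_div, abs_of_pos (mul_pos hM0 hx0), div_le_iff₀ (mul_pos hM0 hx0)]
    rw [div_le_iff₀ hε] at hM'
    nlinarith
end

section
/- Let N ≥ 1, T ≥ 1, and let V_0, …, V_{T−1} ∈ ℂ^{N×N} be unitary matrices. Let A ∈ ℂ^{(T+1)N × (T+1)N} be the block matrix with blocks A_{p,p} = I_N for p ∈ {0,…,T}, A_{p,p+1} = −V_p for 0 ≤ p ≤ T−1, and all other blocks zero. Then A is invertible, ‖A‖ ≤ 2, and ‖A^{−1}‖ ≤ T + 1. -/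
/-- The ℓ²→ℓ² operator norm (largest singular value) of a complex matrix. -/
noncomputable def opNorm {n : Type*} [Fintype n] [DecidableEq n]
    (A : Matrix n n ℂ) : ℝ :=
  ‖Matrix.toEuclideanCLM (𝕜 := ℂ) A‖

open scoped Matrix.Norms.L2Operator in
/-- The clock block matrix built from unitaries is invertible and
well-conditioned: `‖A‖ ≤ 2` and `‖A⁻¹‖ ≤ T + 1`. -/
theorem clock_matrix_well_conditioned (N T : ℕ) (hN : 1 ≤ N) (hT : 1 ≤ T)
    (V : ℕ → Matrix (Fin N) (Fin N) ℂ)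
    (hV : ∀ p < T, V p ∈ Matrix.unitaryGroup (Fin N) ℂ)
    (A : Matrix (Fin (T + 1) × Fin N) (Fin (T + 1) × Fin N) ℂ)
    (hA : ∀ (p q : Fin (T + 1)) (i j : Fin N),
      A (p, i) (q, j) =
        if (q : ℕ) = (p : ℕ) then (1 : Matrix (Fin N) (Fin N) ℂ) i j
        else if (q : ℕ) = (p : ℕ) + 1 then -(V p i j) else 0) :
    IsUnit A ∧ opNorm A ≤ 2 ∧ opNorm A⁻¹ ≤ (T : ℝ) + 1 := by
  have hop : ∀ M : Matrix (Fin (T + 1) × Fin N) (Fin (T + 1) × Fin N) ℂ,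
      opNorm M = ‖M‖ := fun M => rfl
  have hdiag : ∀ d : Fin (T + 1) × Fin N → ℂ, (∀ x, ‖d x‖ ≤ 1) →
      ‖(Matrix.diagonal d : Matrix (Fin (T + 1) × Fin N) (Fin (T + 1) × Fin N) ℂ)‖ ≤ 1 := by
    intro d hd
    rw [Matrix.l2_opNorm_diagonal]
    exact (pi_norm_le_iff_of_nonneg zero_le_one).2 hd
  have h1 : ‖(1 : Matrix (Fin (T + 1) × Fin N) (Fin (T + 1) × Fin N) ℂ)‖ ≤ 1 := by
    rw [← Matrix.diagonal_one]
    exact hdiag _ (by simp)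
  obtain ⟨W, hW⟩ : ∃ W, W = 1 - A := ⟨_, rfl⟩
  have hAW : A = 1 - W := by rw [hW]; abel
  have hWe : ∀ (p q : Fin (T + 1)) (i j : Fin N),
      W (p, i) (q, j) = if (q : ℕ) = (p : ℕ) + 1 then V p i j else 0 := by
    intro p q i j
    rw [hW, Matrix.sub_apply, hA]
    by_cases h : (q : ℕ) = p
    · have : q = p := Fin.ext h
      subst this
      simp [Matrix.one_apply]
    · have h' : p ≠ q := fun e => h (by rw [e])
      by_cases h2 : (q : ℕ) = p + 1
      · simp [h2, h', Matrix.one_apply]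
      · simp [h, h2, h', Matrix.one_apply]
  have hWW : W * star W = Matrix.diagonal
      (fun x : Fin (T + 1) × Fin N => if (x.1 : ℕ) < T then (1 : ℂ) else 0) := by
    ext ⟨p, i⟩ ⟨r, j⟩
    rw [Matrix.mul_apply, Fintype.sum_prod_type]
    simp only [Matrix.star_apply, hWe]
    by_cases hp : (p : ℕ) < T
    · rw [Finset.sum_eq_single (⟨p + 1, by omega⟩ : Fin (T + 1))]
      · by_cases hpr : p = r
        · subst hpr
          have := congrFun (congrFun (Matrix.mem_unitaryGroup_iff.1 (hV p hp)) i) j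
          rw [Matrix.mul_apply] at this
          simp only [Matrix.star_apply] at this
          simp [Matrix.diagonal_apply, hp, Matrix.one_apply] at this ⊢
          exact this
        · have h' : (p : ℕ) ≠ r := fun e => hpr (Fin.ext e)
          simp [Matrix.diagonal_apply, hpr, h']
      · intro q _ hq
        have : (q : ℕ) ≠ p + 1 := fun e => hq (Fin.ext e)
        simp [this]
      · simp
    · have : ∀ q : Fin (T + 1), (q : ℕ) ≠ p + 1 := fun q => by omega
      simp [this, Matrix.diagonal_apply, hp]
  have hWn : ‖W‖ ≤ 1 := by
    have h := CStarRing.norm_self_mul_star (x := W)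
    have h2 : ‖W * star W‖ ≤ 1 := by
      rw [hWW]
      apply hdiag
      intro x
      split_ifs <;> simp
    nlinarith [norm_nonneg W]
  have hpow : ∀ k : ℕ, ‖W ^ k‖ ≤ 1 := by
    intro k
    induction k with
    | zero => simpa using h1
    | succ k ih =>
      rw [pow_succ]
      exact (norm_mul_le _ _).trans (mul_le_one₀ ih (norm_nonneg _) hWn)
  have hsupp : ∀ (k : ℕ) (p q : Fin (T + 1)) (i j : Fin N), (q : ℕ) ≠ p + k →
      (W ^ k) (p, i) (q, j) = 0 := by
    intro k
    induction k with
    | zero =>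
      intro p q i j h
      have : p ≠ q := fun e => h (by simp [e])
      simp [Matrix.one_apply, this]
    | succ k ih =>
      intro p q i j h
      rw [pow_succ, Matrix.mul_apply]
      apply Finset.sum_eq_zero
      rintro ⟨r, l⟩ _
      by_cases hr : (r : ℕ) = p + k
      · rw [hWe, if_neg (by omega), mul_zero]
      · rw [ih p r i l hr, zero_mul]
  have hnil : W ^ (T + 1) = 0 := by
    ext ⟨p, i⟩ ⟨q, j⟩
    exact hsupp _ p q i j (by omega)
  have hinv : A * ∑ k ∈ Finset.range (T + 1), W ^ k = 1 := by
    rw [hAW, mul_neg_geom_sum, hnil, sub_zero]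
  refine ⟨IsUnit.of_mul_eq_one _ hinv, ?_, ?_⟩
  · rw [hop, hAW]
    exact (norm_sub_le _ _).trans (by linarith)
  · rw [hop, Matrix.inv_eq_right_inv hinv]
    refine (norm_sum_le _ _).trans ((Finset.sum_le_sum fun k _ => hpow k).trans ?_)
    simp
end
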